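/- Let a ∈ ℝ, let I be an interval with least element a, nonempty interior, and I ⊂ [a,∞), let m ∈ ℕ*, let α = (α₁,…,α_m) ∈ (0,1]^m, let q_a ∈ ℝ^m, and let A : I → ℝ^{m×m}, B : I → ℝ^m be locally essentially bounded. Suppose _cZ satisfies the left Caputo state-transition integral equation: for every s, t ∈ I with s ≤ t and all i, j, _cZ_{ij}(t,s) = δ_{ij} + (1/Γ(α_i)) ∫_s^t (t−τ)^{α_i−1} (A(τ) _cZ(τ,s))_{ij} dτ. Then the function q₂ defined for every t ∈ I by q₂(t) := _cZ(t,a)·q_a + ∫_a^t _cZ(t,s)·B(s) ds satisfies, for every t ∈ I and every i ∈ {1,…,m}, (q₂)_i(t) = (q_a)_i + (1/Γ(α_i)) ∫_a^t (t−τ)^{α_i−1} ( A(τ)·q₂(τ) + I^{1−α}_{a+}[B](τ) )_i dτ, where (I^{1−α}_{a+}[B])_i := I^{1−α_i}_{a+}[B_i]; equivalently, q₂ is the unique global solution of the Caputo Cauchy problem _cD^{α_i}_{a+}[q_i] = (A q)_i + I^{1−α_i}_{a+}[B_i] a.e. on I with q(a) = q_a. -/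

import Mathlib

open MeasureTheory Set

/-- Left Riemann–Liouville fractional integral of order `α` with base point `a`
(for `α = 0` it is the identity). -/
noncomputable def rlInt (a α : ℝ) (q : ℝ → ℝ) (t : ℝ) : ℝ :=
  if α = 0 then q t else (1 / Real.Gamma α) * ∫ τ in a..t, (t - τ) ^ (α - 1) * q τ

/-- `q` is a global solution on `I` of the Caputo Cauchy problem
`_cD^{α_i}_{a+}[q_i] = F_i(q(·),·)` a.e. on `I`, `q(a) = qa`. -/
def IsCaputoSol (a : ℝ) (I : Set ℝ) {m : ℕ} (α : Fin m → ℝ) (qa : Fin m → ℝ)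
    (F : (Fin m → ℝ) → ℝ → Fin m → ℝ) (q : ℝ → Fin m → ℝ) : Prop :=
  ContinuousOn q I ∧ q a = qa ∧
  ∀ i, ∃ c : ℝ, ∃ h : ℝ → ℝ,
    (∀ b ∈ I, MeasureTheory.IntegrableOn h (Set.Icc a b)) ∧
    (∀ᵐ t ∂(MeasureTheory.volume.restrict I),
      rlInt a (1 - α i) (fun τ => q τ i - qa i) t = c + ∫ τ in a..t, h τ) ∧
    (∀ᵐ t ∂(MeasureTheory.volume.restrict I), h t = F (q t) t i)

namespace FracAux

/-- Fractional integral of positive order. -/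
noncomputable def J (α a : ℝ) (f : ℝ → ℝ) (t : ℝ) : ℝ :=
  (1 / Real.Gamma α) * ∫ τ in a..t, (t - τ) ^ (α - 1) * f τ

/-- Measurable and essentially bounded on `(a,b]`. -/
def BM (a b : ℝ) (f : ℝ → ℝ) : Prop :=
  AEStronglyMeasurable f (volume.restrict (Ioc a b)) ∧
    ∃ M, ∀ᵐ t ∂(volume.restrict (Ioc a b)), |f t| ≤ M

lemma BM.mono {a b a' b' : ℝ} {f : ℝ → ℝ} (h : BM a b f) (ha : a ≤ a') (hb : b' ≤ b) :
    BM a' b' f := by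
  obtain ⟨h1, M, h2⟩ := h
  have : Ioc a' b' ⊆ Ioc a b := Ioc_subset_Ioc ha hb
  exact ⟨h1.mono_set this, M, ae_restrict_of_ae_restrict_of_subset this h2⟩

lemma BM.add {a b : ℝ} {f g : ℝ → ℝ} (hf : BM a b f) (hg : BM a b g) :
    BM a b (fun t => f t + g t) := by
  obtain ⟨h1, M, h2⟩ := hf
  obtain ⟨h3, N, h4⟩ := hg
  refine ⟨h1.add h3, M + N, ?_⟩
  filter_upwards [h2, h4] with t h h'
  exact (abs_add_le _ _).trans (add_le_add h h')

lemma BM.mul {a b : ℝ} {f g : ℝ → ℝ} (hf : BM a b f) (hg : BM a b g) :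
    BM a b (fun t => f t * g t) := by
  obtain ⟨h1, M, h2⟩ := hf
  obtain ⟨h3, N, h4⟩ := hg
  refine ⟨h1.mul h3, M * N, ?_⟩
  filter_upwards [h2, h4] with t h h'
  rw [abs_mul]
  exact mul_le_mul h h' (abs_nonneg _) ((abs_nonneg _).trans h)

lemma BM.const (a b c : ℝ) : BM a b (fun _ => c) :=
  ⟨aestronglyMeasurable_const, |c|, Filter.Eventually.of_forall fun _ => le_rfl⟩

lemma BM.sub {a b : ℝ} {f g : ℝ → ℝ} (hf : BM a b f) (hg : BM a b g) :
    BM a b (fun t => f t - g t) := by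
  have := hf.add ((BM.const a b (-1)).mul hg)
  simpa [sub_eq_add_neg] using this

lemma BM.sum {a b : ℝ} {ι : Type*} (s : Finset ι) {f : ι → ℝ → ℝ} (hf : ∀ i, BM a b (f i)) :
    BM a b (fun t => ∑ i ∈ s, f i t) := by
  classical
  induction s using Finset.induction_on with
  | empty => simpa using BM.const a b 0
  | insert i s hi ih => simpa [Finset.sum_insert hi] using (hf i).add ih

lemma BM.of_cont {a b : ℝ} {f : ℝ → ℝ} (hf : ContinuousOn f (Icc a b)) : BM a b f := by
  refine ⟨(hf.aestronglyMeasurable measurableSet_Icc).mono_set Ioc_subset_Icc_self, ?_⟩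
  obtain ⟨M, hM⟩ := isCompact_Icc.exists_bound_of_continuousOn hf
  refine ⟨M, ?_⟩
  filter_upwards [ae_restrict_mem measurableSet_Ioc] with t ht
  exact hM t (Ioc_subset_Icc_self ht)

lemma BM.congr {a b : ℝ} {f g : ℝ → ℝ} (hf : BM a b f)
    (h : ∀ᵐ t ∂(volume.restrict (Ioc a b)), f t = g t) : BM a b g := by
  obtain ⟨h1, M, h2⟩ := hf
  refine ⟨h1.congr h, M, ?_⟩
  filter_upwards [h, h2] with t h h'
  rwa [← h]

lemma BM.mul_int {a b : ℝ} {f g : ℝ → ℝ} (hf : BM a b f) (hab : a ≤ b)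
    (hg : IntervalIntegrable g volume a b) :
    IntervalIntegrable (fun t => g t * f t) volume a b := by
  obtain ⟨h1, M, h2⟩ := hf
  rw [intervalIntegrable_iff_integrableOn_Ioc_of_le hab] at *
  exact Integrable.mul_bdd (c := M) hg h1 (by simpa using h2)

lemma BM.int {a b : ℝ} {f : ℝ → ℝ} (hf : BM a b f) (hab : a ≤ b) :
    IntervalIntegrable f volume a b := by
  simpa using hf.mul_int hab (g := fun _ => 1) (by simp)

lemma ker_int {α : ℝ} (hα : 0 < α) (s t : ℝ) :
    IntervalIntegrable (fun τ => (t - τ) ^ (α - 1)) volume s t := by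
  have h := (intervalIntegral.intervalIntegrable_rpow' (a := t - s) (b := 0)
    (r := α - 1) (by linarith)).comp_sub_left t
  simpa using h

/-- the kernel is integrable also on earlier subintervals -/
lemma ker_int' {α : ℝ} (hα : 0 < α) (s r t : ℝ) :
    IntervalIntegrable (fun τ => (t - τ) ^ (α - 1)) volume s r :=
  (ker_int hα s t).trans (ker_int hα r t).symm

lemma ker_eval {α : ℝ} (hα : 0 < α) (s r t : ℝ) :
    ∫ τ in s..r, (t - τ) ^ (α - 1) = ((t - s) ^ α - (t - r) ^ α) / α := by
  rw [intervalIntegral.integral_comp_sub_left (fun x => x ^ (α - 1)) t,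
    integral_rpow (Or.inl (by linarith))]
  simp

lemma ker_mul_int {α : ℝ} (hα : 0 < α) {a b : ℝ} {f : ℝ → ℝ} (hf : BM a b f) (hab : a ≤ b)
    (t : ℝ) : IntervalIntegrable (fun τ => (t - τ) ^ (α - 1) * f τ) volume a b :=
  hf.mul_int hab (ker_int' hα a b t)

lemma ker_exp {α r : ℝ} (hα : 0 < α) (hr : 0 < r) {s t : ℝ} (hst : s ≤ t) :
    ∫ τ in s..t, (t - τ) ^ (α - 1) * Real.exp (-(r * (t - τ))) ≤ (1 / r) ^ α * Real.Gamma α := by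
  rw [intervalIntegral.integral_comp_sub_left (fun x => x ^ (α - 1) * Real.exp (-(r * x))) t,
    ← Real.integral_rpow_mul_exp_neg_mul_Ioi hα hr, sub_self,
    intervalIntegral.integral_of_le (by linarith)]
  refine setIntegral_mono_set ?_ ?_ ?_
  · refine not_imp_comm.1 integral_undef ?_
    rw [Real.integral_rpow_mul_exp_neg_mul_Ioi hα hr]
    have := Real.Gamma_pos_of_pos hα
    positivity
  · filter_upwards [ae_restrict_mem measurableSet_Ioi] with x hx
    have : (0:ℝ) < x := hx
    simp only [Pi.zero_apply]
    positivity
  · exact Ioc_subset_Ioi_self.eventuallyLE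

lemma ker_beta {α β : ℝ} (hα : 0 < α) (hβ : 0 < β) (h : α + β = 1) {s t : ℝ} (hst : s < t) :
    ∫ τ in s..t, (t - τ) ^ (α - 1) * (τ - s) ^ (β - 1) = Real.Gamma α * Real.Gamma β := by
  have h1 : ∫ τ in s..t, (t - τ) ^ (α - 1) * (τ - s) ^ (β - 1)
      = ∫ x in (0:ℝ)..(t - s), x ^ (β - 1) * ((t - s) - x) ^ (α - 1) := by
    rw [← sub_self s, ← intervalIntegral.integral_comp_sub_right
      (fun x => x ^ (β - 1) * ((t - s) - x) ^ (α - 1)) s]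
    congr 1
    ext τ
    rw [mul_comm]
    congr 2
    ring
  rw [h1]
  have h2 := Complex.betaIntegral_scaled (β : ℂ) (α : ℂ) (sub_pos.2 hst)
  rw [Complex.betaIntegral_eq_Gamma_mul_div _ _ (by simpa) (by simpa)] at h2
  have h3 : (β : ℂ) + α = 1 := by rw [← Complex.ofReal_add, add_comm, h]; simp
  rw [h3, sub_self, Complex.cpow_zero, one_mul, Complex.Gamma_one, div_one,
    Complex.Gamma_ofReal, Complex.Gamma_ofReal] at h2
  have h4 : ∫ x in (0:ℝ)..(t - s), (x : ℂ) ^ ((β : ℂ) - 1) * (((t - s : ℝ) : ℂ) - x) ^ ((α : ℂ) - 1)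
      = ((∫ x in (0:ℝ)..(t - s), x ^ (β - 1) * ((t - s) - x) ^ (α - 1) : ℝ) : ℂ) := by
    rw [← intervalIntegral.integral_ofReal]
    refine intervalIntegral.integral_congr fun x hx => ?_
    rw [uIcc_of_le (by linarith)] at hx
    rw [Complex.ofReal_mul, Complex.ofReal_cpow hx.1, Complex.ofReal_cpow (by linarith [hx.2])]
    push_cast
    rfl
  rw [h4, ← Complex.ofReal_mul] at h2
  rw [Complex.ofReal_injective h2, mul_comm]

lemma ker_beta_int {α β : ℝ} (hα : 0 < α) (hβ : 0 < β) (h : α + β = 1) {s t : ℝ} (hst : s < t) :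
    IntervalIntegrable (fun τ => (t - τ) ^ (α - 1) * (τ - s) ^ (β - 1)) volume s t := by
  refine intervalIntegral.intervalIntegrable_of_integral_ne_zero ?_
  rw [ker_beta hα hβ h hst]
  have := Real.Gamma_pos_of_pos hα
  have := Real.Gamma_pos_of_pos hβ
  positivity

/-- Fubini on a triangle. -/
lemma tri {a t : ℝ} (hat : a ≤ t) (F : ℝ × ℝ → ℝ)
    (hF : Integrable ({p : ℝ × ℝ | p.2 ≤ p.1}.indicator F)
      ((volume.restrict (Ioc a t)).prod (volume.restrict (Ioc a t)))) :
    ∫ τ in a..t, ∫ s in a..τ, F (τ, s) = ∫ s in a..t, ∫ τ in s..t, F (τ, s) := by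
  have key := integral_integral_swap
    (f := fun τ s => {p : ℝ × ℝ | p.2 ≤ p.1}.indicator F (τ, s)) hF
  rw [intervalIntegral.integral_of_le hat, intervalIntegral.integral_of_le hat]
  have e1 : ∀ τ ∈ Ioc a t, ∫ s in a..τ, F (τ, s)
      = ∫ s in Ioc a t, {p : ℝ × ℝ | p.2 ≤ p.1}.indicator F (τ, s) := by
    intro τ hτ
    have : (fun s => {p : ℝ × ℝ | p.2 ≤ p.1}.indicator F (τ, s))
        = (Iic τ).indicator (fun s => F (τ, s)) := by
      ext s; simp [indicator]
    rw [this, setIntegral_indicator measurableSet_Iic, intervalIntegral.integral_of_le hτ.1.le,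
      Ioc_inter_Iic, min_eq_right hτ.2]
  have e2 : ∀ s ∈ Ioc a t, ∫ τ in s..t, F (τ, s)
      = ∫ τ in Ioc a t, {p : ℝ × ℝ | p.2 ≤ p.1}.indicator F (τ, s) := by
    intro s hs
    have : (fun τ => {p : ℝ × ℝ | p.2 ≤ p.1}.indicator F (τ, s))
        = (Ici s).indicator (fun τ => F (τ, s)) := by
      ext τ; simp [indicator]
    have h2 : Ioc a t ∩ Ici s = Icc s t := by
      ext x; simp only [mem_inter_iff, mem_Ioc, mem_Ici, mem_Icc]
      have := hs.1
      constructor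
      · rintro ⟨⟨_, h⟩, h'⟩; exact ⟨h', h⟩
      · rintro ⟨h, h'⟩; exact ⟨⟨by linarith, h'⟩, h⟩
    rw [this, setIntegral_indicator measurableSet_Ici, intervalIntegral.integral_of_le hs.2,
      h2, integral_Icc_eq_integral_Ioc]
  rw [setIntegral_congr_fun measurableSet_Ioc e1, setIntegral_congr_fun measurableSet_Ioc e2]
  exact key

end FracAux
namespace FracAux

lemma semigroup {α β : ℝ} (hα : 0 < α) (hβ : 0 < β) (h : α + β = 1) {a t : ℝ} (hat : a ≤ t)
    {f : ℝ → ℝ} (hf : BM a t f) : J α a (J β a f) t = ∫ s in a..t, f s := by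
  have hGα := Real.Gamma_pos_of_pos hα
  have hGβ := Real.Gamma_pos_of_pos hβ
  set F : ℝ × ℝ → ℝ := fun p => ((t - p.1) ^ (α - 1) * (p.1 - p.2) ^ (β - 1)) * f p.2 with hFdef
  have hms : MeasurableSet {p : ℝ × ℝ | p.2 ≤ p.1} := measurableSet_le measurable_snd measurable_fst
  have hfi := hf.int hat
  rw [intervalIntegrable_iff_integrableOn_Ioc_of_le hat] at hfi
  have hsec : ∀ s ∈ Ioo a t, ∀ g : ℝ → ℝ, (fun τ => {p : ℝ × ℝ | p.2 ≤ p.1}.indicator (fun p => g p.1) (τ, s))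
      = (Ici s).indicator g := by
    intro s _ g; ext τ; simp [indicator]
  have h2 : ∀ s ∈ Ioo a t, Ici s ∩ Ioc a t = Icc s t := by
    intro s hs
    ext x; simp only [mem_inter_iff, mem_Ioc, mem_Ici, mem_Icc]
    have := hs.1
    constructor
    · rintro ⟨h', ⟨_, h⟩⟩; exact ⟨h', h⟩
    · rintro ⟨h, h'⟩; exact ⟨h, by linarith, h'⟩
  have hIoo : ∀ᵐ s ∂(volume.restrict (Ioc a t)), s ∈ Ioo a t := by
    rw [← restrict_Ioo_eq_restrict_Ioc]
    exact ae_restrict_mem measurableSet_Ioo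
  have hF : Integrable ({p : ℝ × ℝ | p.2 ≤ p.1}.indicator F)
      ((volume.restrict (Ioc a t)).prod (volume.restrict (Ioc a t))) := by
    have hm : AEStronglyMeasurable ({p : ℝ × ℝ | p.2 ≤ p.1}.indicator F)
        ((volume.restrict (Ioc a t)).prod (volume.restrict (Ioc a t))) := by
      refine AEStronglyMeasurable.indicator ?_ hms
      refine AEStronglyMeasurable.mul ?_ hf.1.comp_snd
      exact Measurable.aestronglyMeasurable (by fun_prop)
    rw [integrable_prod_iff' hm]
    constructor
    · filter_upwards [hIoo] with s hs
      have : (fun τ => {p : ℝ × ℝ | p.2 ≤ p.1}.indicator F (τ, s))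
          = (Ici s).indicator (fun τ => F (τ, s)) := by
        ext τ; simp [indicator]
      rw [this, integrable_indicator_iff measurableSet_Ici, IntegrableOn,
        Measure.restrict_restrict measurableSet_Ici, h2 s hs, ← restrict_Ioc_eq_restrict_Icc]
      have := (ker_beta_int hα hβ h hs.2).mul_const (f s)
      rwa [intervalIntegrable_iff_integrableOn_Ioc_of_le hs.2.le] at this
    · have : Integrable (fun s => Real.Gamma α * Real.Gamma β * |f s|) (volume.restrict (Ioc a t)) :=
        hfi.abs.const_mul _
      refine this.congr ?_
      filter_upwards [hIoo] with s hs
      have : (fun τ => ‖{p : ℝ × ℝ | p.2 ≤ p.1}.indicator F (τ, s)‖)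
          = (Ici s).indicator (fun τ => ‖F (τ, s)‖) := by
        ext τ; by_cases h : s ≤ τ <;> simp [indicator, h]
      rw [this, integral_indicator measurableSet_Ici, Measure.restrict_restrict measurableSet_Ici,
        h2 s hs, integral_Icc_eq_integral_Ioc, ← ker_beta hα hβ h hs.2,
        ← intervalIntegral.integral_mul_const, intervalIntegral.integral_of_le hs.2.le]
      refine setIntegral_congr_fun measurableSet_Ioc fun τ hτ => ?_
      have h3 : 0 ≤ t - τ := by linarith [hτ.2]
      have h4 : 0 ≤ τ - s := by linarith [hτ.1]
      simp only [hFdef, norm_mul, Real.norm_eq_abs]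
      rw [abs_of_nonneg (Real.rpow_nonneg h3 _), abs_of_nonneg (Real.rpow_nonneg h4 _)]
  have key := tri hat F hF
  have e1 : ∀ τ, (t - τ) ^ (α - 1) * J β a f τ = (1 / Real.Gamma β) * ∫ s in a..τ, F (τ, s) := by
    intro τ
    simp only [J, hFdef]
    rw [mul_left_comm, ← intervalIntegral.integral_const_mul]
    simp only [mul_assoc]
  have e2 : ∫ s in a..t, ∫ τ in s..t, F (τ, s) = ∫ s in a..t, (Real.Gamma α * Real.Gamma β) * f s := by
    rw [intervalIntegral.integral_of_le hat, intervalIntegral.integral_of_le hat]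
    refine integral_congr_ae ?_
    filter_upwards [hIoo] with s hs
    simp only [hFdef]
    rw [intervalIntegral.integral_mul_const, ker_beta hα hβ h hs.2]
  rw [J]
  simp_rw [e1]
  rw [intervalIntegral.integral_const_mul, key, e2, intervalIntegral.integral_const_mul]
  field_simp

lemma J_bound {α : ℝ} (hα : 0 < α) {a t M : ℝ} (hat : a ≤ t) {f : ℝ → ℝ}
    (hf : ∀ᵐ s ∂(volume.restrict (Ioc a t)), |f s| ≤ M) :
    |∫ τ in a..t, (t - τ) ^ (α - 1) * f τ| ≤ M * (t - a) ^ α / α := by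
  have h1 := intervalIntegral.norm_integral_le_of_norm_le (μ := volume) hat
    (f := fun τ => (t - τ) ^ (α - 1) * f τ) (g := fun τ => (t - τ) ^ (α - 1) * M) ?_
    ((ker_int hα a t).mul_const M)
  · rw [intervalIntegral.integral_mul_const, ker_eval hα, sub_self, Real.zero_rpow hα.ne',
      sub_zero] at h1
    rw [Real.norm_eq_abs] at h1
    refine h1.trans (le_of_eq (by ring))
  · rw [ae_restrict_iff' measurableSet_Ioc] at hf
    filter_upwards [hf] with τ h hτ
    have h3 : 0 ≤ t - τ := by linarith [hτ.2]
    rw [norm_mul, Real.norm_eq_abs, Real.norm_eq_abs, abs_of_nonneg (Real.rpow_nonneg h3 _)]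
    exact mul_le_mul_of_nonneg_left (h hτ) (Real.rpow_nonneg h3 _)

lemma J_holder {α : ℝ} (hα : 0 < α) (hα1 : α ≤ 1) {a b M : ℝ} {f : ℝ → ℝ} (hM : 0 ≤ M)
    (hfm : AEStronglyMeasurable f (volume.restrict (Ioc a b)))
    (hf : ∀ᵐ s ∂(volume.restrict (Ioc a b)), |f s| ≤ M) {t u : ℝ} (hat : a ≤ t) (htu : t ≤ u)
    (hub : u ≤ b) :
    |(∫ τ in a..u, (u - τ) ^ (α - 1) * f τ) - ∫ τ in a..t, (t - τ) ^ (α - 1) * f τ|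
      ≤ 2 * M / α * (u - t) ^ α := by
  have hB : BM a b f := ⟨hfm, M, hf⟩
  have i1 := ker_mul_int hα (hB.mono le_rfl (htu.trans hub)) hat u
  have i2 := ker_mul_int hα (hB.mono hat hub) htu u
  have i3 := ker_mul_int hα (hB.mono le_rfl (htu.trans hub)) hat t
  rw [← intervalIntegral.integral_add_adjacent_intervals i1 i2]
  have b2 := J_bound hα htu (ae_restrict_of_ae_restrict_of_subset (Ioc_subset_Ioc hat hub) hf)
  have b1 : |(∫ τ in a..t, (u - τ) ^ (α - 1) * f τ) - ∫ τ in a..t, (t - τ) ^ (α - 1) * f τ|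
      ≤ M * (u - t) ^ α / α := by
    rw [← intervalIntegral.integral_sub i1 i3]
    have h1 := intervalIntegral.norm_integral_le_of_norm_le (μ := volume) hat
      (f := fun τ => (u - τ) ^ (α - 1) * f τ - (t - τ) ^ (α - 1) * f τ)
      (g := fun τ => ((t - τ) ^ (α - 1) - (u - τ) ^ (α - 1)) * M) ?_
      (((ker_int' hα a t t).sub (ker_int' hα a t u)).mul_const M)
    · rw [intervalIntegral.integral_mul_const, intervalIntegral.integral_sub
        (ker_int' hα a t t) (ker_int' hα a t u), ker_eval hα, ker_eval hα, sub_self,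
        Real.zero_rpow hα.ne', sub_zero, Real.norm_eq_abs] at h1
      refine h1.trans ?_
      have h5 : (t - a) ^ α ≤ (u - a) ^ α :=
        Real.rpow_le_rpow (by linarith) (by linarith) hα.le
      have : ((t - a) ^ α / α - ((u - a) ^ α - (u - t) ^ α) / α)
          = ((u - t) ^ α - ((u - a) ^ α - (t - a) ^ α)) / α := by ring
      rw [this, div_mul_eq_mul_div, mul_comm M]
      gcongr
      linarith
    · have hf' := ae_restrict_of_ae_restrict_of_subset
        (Ioc_subset_Ioc (le_refl a) (htu.trans hub)) hf
      rw [ae_restrict_iff' measurableSet_Ioc] at hf'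
      have hne : ∀ᵐ τ : ℝ, τ ≠ t := by simp [ae_iff]
      filter_upwards [hf', hne] with τ h hne hτ
      have h3 : 0 < t - τ := by
        have := lt_of_le_of_ne hτ.2 hne
        linarith
      have h4 : (u - τ) ^ (α - 1) ≤ (t - τ) ^ (α - 1) :=
        Real.rpow_le_rpow_of_nonpos h3 (by linarith) (by linarith)
      rw [← sub_mul, norm_mul, Real.norm_eq_abs, Real.norm_eq_abs, abs_sub_comm,
        abs_of_nonneg (by linarith)]
      exact mul_le_mul_of_nonneg_left (h hτ) (by linarith)
  calc _ = |((∫ τ in a..t, (u - τ) ^ (α - 1) * f τ) - ∫ τ in a..t, (t - τ) ^ (α - 1) * f τ)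
        + ∫ τ in t..u, (u - τ) ^ (α - 1) * f τ| := by congr 1; ring
    _ ≤ M * (u - t) ^ α / α + M * (u - t) ^ α / α := (abs_add_le _ _).trans (add_le_add b1 b2)
    _ = _ := by ring

lemma J_cont {α : ℝ} (hα : 0 < α) (hα1 : α ≤ 1) {a b : ℝ} {f : ℝ → ℝ} (hf : BM a b f) :
    ContinuousOn (J α a f) (Icc a b) := by
  obtain ⟨hfm, M, hM⟩ := hf
  have hM' : ∀ᵐ s ∂(volume.restrict (Ioc a b)), |f s| ≤ |M| := by
    filter_upwards [hM] with s hs using hs.trans (le_abs_self M)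
  have hJ : ContinuousOn (fun t => ∫ τ in a..t, (t - τ) ^ (α - 1) * f τ) (Icc a b) := by
    have hb : ∀ t ∈ Icc a b, ∀ u ∈ Icc a b,
        |(∫ τ in a..u, (u - τ) ^ (α - 1) * f τ) - ∫ τ in a..t, (t - τ) ^ (α - 1) * f τ|
          ≤ 2 * |M| / α * |u - t| ^ α := by
      intro t ht u hu
      rcases le_total t u with h | h
      · rw [abs_of_nonneg (sub_nonneg.2 h)]
        exact J_holder hα hα1 (abs_nonneg M) hfm hM' ht.1 h hu.2
      · rw [abs_sub_comm, abs_sub_comm u t, abs_of_nonneg (sub_nonneg.2 h)]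
        exact J_holder hα hα1 (abs_nonneg M) hfm hM' hu.1 h ht.2
    intro t ht
    rw [ContinuousWithinAt, tendsto_iff_dist_tendsto_zero]
    have hl : Filter.Tendsto (fun u => 2 * |M| / α * |u - t| ^ α) (nhdsWithin t (Icc a b))
        (nhds 0) := by
      have : Continuous fun u : ℝ => 2 * |M| / α * |u - t| ^ α :=
        continuous_const.mul ((continuous_id.sub continuous_const).abs.rpow_const
          (fun _ => Or.inr hα.le))
      have h2 := this.tendsto t
      simp only [sub_self, abs_zero, Real.zero_rpow hα.ne', mul_zero] at h2
      exact h2.mono_left nhdsWithin_le_nhds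
    refine squeeze_zero' (Filter.Eventually.of_forall fun _ => dist_nonneg) ?_ hl
    filter_upwards [self_mem_nhdsWithin] with u hu
    rw [Real.dist_eq]
    exact hb t ht u hu
  exact continuousOn_const.mul hJ

lemma J_one (a : ℝ) (f : ℝ → ℝ) (t : ℝ) : J 1 a f t = ∫ s in a..t, f s := by
  simp [J]

lemma rlInt_zero (a : ℝ) (f : ℝ → ℝ) (t : ℝ) : rlInt a 0 f t = f t := by simp [rlInt]

lemma rlInt_pos {β : ℝ} (hβ : β ≠ 0) (a : ℝ) (f : ℝ → ℝ) (t : ℝ) :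
    rlInt a β f t = J β a f t := by simp [rlInt, J, hβ]

lemma rlInt_BM {α : ℝ} (hα : 0 < α) (hα1 : α ≤ 1) {a b : ℝ} {f : ℝ → ℝ} (hf : BM a b f) :
    BM a b (fun t => rlInt a (1 - α) f t) := by
  rcases hα1.eq_or_lt with h | h
  · subst h; simpa [rlInt_zero] using hf
  · simp only [rlInt_pos (sub_pos.2 h).ne']
    exact BM.of_cont (J_cont (by linarith) (by linarith) hf)

lemma J_rlInt {α : ℝ} (hα : 0 < α) (hα1 : α ≤ 1) {a t : ℝ} (hat : a ≤ t) {f : ℝ → ℝ}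
    (hf : BM a t f) : J α a (fun t => rlInt a (1 - α) f t) t = ∫ s in a..t, f s := by
  rcases hα1.eq_or_lt with h | h
  · subst h; simp [rlInt_zero, J_one]
  · simp only [rlInt_pos (sub_pos.2 h).ne']
    exact semigroup hα (by linarith) (by ring) hat hf

lemma rlInt_J {α : ℝ} (hα : 0 < α) (hα1 : α ≤ 1) {a t : ℝ} (hat : a ≤ t) {f : ℝ → ℝ}
    (hf : BM a t f) : rlInt a (1 - α) (J α a f) t = ∫ s in a..t, f s := by
  rcases hα1.eq_or_lt with h | h
  · subst h; simp [rlInt_zero, J_one]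
  · simp only [rlInt_pos (sub_pos.2 h).ne']
    exact semigroup (by linarith) hα (by ring) hat hf

lemma J_add {α : ℝ} (hα : 0 < α) {a t : ℝ} (hat : a ≤ t) {f g : ℝ → ℝ} (hf : BM a t f)
    (hg : BM a t g) : J α a (fun s => f s + g s) t = J α a f t + J α a g t := by
  simp only [J, mul_add]
  rw [intervalIntegral.integral_add (ker_mul_int hα hf hat t) (ker_mul_int hα hg hat t), mul_add]

lemma J_sub {α : ℝ} (hα : 0 < α) {a t : ℝ} (hat : a ≤ t) {f g : ℝ → ℝ} (hf : BM a t f)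
    (hg : BM a t g) : J α a (fun s => f s - g s) t = J α a f t - J α a g t := by
  simp only [J, mul_sub]
  rw [intervalIntegral.integral_sub (ker_mul_int hα hf hat t) (ker_mul_int hα hg hat t), mul_sub]

lemma J_congr {α a t : ℝ} (hat : a ≤ t) {f g : ℝ → ℝ}
    (h : ∀ᵐ s ∂(volume.restrict (Ioc a t)), f s = g s) : J α a f t = J α a g t := by
  simp only [J]
  congr 1
  rw [intervalIntegral.integral_of_le hat, intervalIntegral.integral_of_le hat]
  refine integral_congr_ae ?_
  filter_upwards [h] with s hs
  rw [hs]

/-- Gronwall. -/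
lemma gronwall {m : ℕ} (α : Fin m → ℝ) (hα : ∀ i, 0 < α i ∧ α i ≤ 1) (M : ℝ) {a b : ℝ} :
    ∃ K : ℝ, 0 ≤ K ∧ ∀ (A : ℝ → Matrix (Fin m) (Fin m) ℝ) (s : ℝ) (_ : s ∈ Icc a b)
      (_ : ∀ᵐ t ∂(volume.restrict (Icc a b)), ∀ i j, |A t i j| ≤ M)
      (c : ℝ) (_ : 0 ≤ c) (c' : Fin m → ℝ) (_ : ∀ i, |c' i| ≤ c) (v : ℝ → Fin m → ℝ)
      (_ : ∀ i, ContinuousOn (fun t => v t i) (Icc s b))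
      (_ : ∀ t ∈ Icc s b, ∀ i, v t i = c' i + J (α i) s (fun τ => ∑ k, A τ i k * v τ k) t),
      ∀ t ∈ Icc s b, ∀ i, |v t i| ≤ K * c := by
  obtain ⟨r, hr, hr2⟩ : ∃ r : ℝ, 0 < r ∧ ∀ i, m * |M| * (1 / r) ^ (α i) ≤ 1 / 2 := by
    have : ∀ i, ∀ᶠ r : ℝ in Filter.atTop, m * |M| * (1 / r) ^ (α i) ≤ 1 / 2 := by
      intro i
      have h1 : Filter.Tendsto (fun r : ℝ => m * |M| * (1 / r) ^ (α i)) Filter.atTop (nhds 0) := by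
        have h2 := (tendsto_rpow_neg_atTop (hα i).1).const_mul (m * |M|)
        rw [mul_zero] at h2
        refine h2.congr' ?_
        filter_upwards [Filter.eventually_gt_atTop 0] with r hr
        rw [one_div, Real.inv_rpow hr.le, Real.rpow_neg hr.le]
      exact h1.eventually_le_const (by norm_num)
    obtain ⟨r, h1, h2⟩ := ((Filter.eventually_gt_atTop (0:ℝ)).and
      (Filter.eventually_all.2 this)).exists
    exact ⟨r, h1, h2⟩
  refine ⟨2 * Real.exp (r * (b - a)), by positivity, ?_⟩
  intro A s hs hA c hc c' hc' v hv hveq t ht i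
  have hsb : s ≤ b := hs.2
  have hcont : ∀ i, ContinuousOn (fun t => Real.exp (-(r * (t - s))) * |v t i|) (Icc s b) :=
    fun i => (Continuous.continuousOn (by fun_prop)).mul (hv i).abs
  have hmax : ∀ i, ∃ t₀ ∈ Icc s b, ∀ t ∈ Icc s b,
      Real.exp (-(r * (t - s))) * |v t i| ≤ Real.exp (-(r * (t₀ - s))) * |v t₀ i| := by
    intro i
    obtain ⟨t₀, h1, h2⟩ := isCompact_Icc.exists_isMaxOn (nonempty_Icc.2 hsb) (hcont i)
    exact ⟨t₀, h1, fun t ht => h2 ht⟩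
  choose T hT hTmax using hmax
  have hne : (Finset.univ : Finset (Fin m)).Nonempty := ⟨i, Finset.mem_univ _⟩
  obtain ⟨i₀, -, hi₀⟩ := Finset.exists_max_image Finset.univ
    (fun i => Real.exp (-(r * (T i - s))) * |v (T i) i|) hne
  set U := Real.exp (-(r * (T i₀ - s))) * |v (T i₀) i₀| with hU
  have hU0 : 0 ≤ U := by positivity
  have hUall : ∀ t ∈ Icc s b, ∀ k, |v t k| ≤ U * Real.exp (r * (t - s)) := by
    intro t ht k
    have h1 := (hTmax k t ht).trans (hi₀ k (Finset.mem_univ _))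
    rw [Real.exp_neg] at h1
    rwa [inv_mul_le_iff₀ (Real.exp_pos _), mul_comm] at h1
  have hA' := ae_restrict_of_ae_restrict_of_subset (Ioc_subset_Icc_self.trans
    (Icc_subset_Icc hs.1 le_rfl)) hA
  have step : ∀ t ∈ Icc s b, ∀ k, Real.exp (-(r * (t - s))) * |v t k| ≤ c + U / 2 := by
    intro t ht k
    have hG := Real.Gamma_pos_of_pos (hα k).1
    have hA'' := ae_restrict_of_ae_restrict_of_subset (Ioc_subset_Ioc (le_refl s) ht.2) hA'
    rw [ae_restrict_iff' measurableSet_Ioc] at hA''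
    have hgi : IntervalIntegrable (fun τ => ((t - τ) ^ (α k - 1) * Real.exp (-(r * (t - τ)))) *
        (m * |M| * U * Real.exp (r * (t - s)))) volume s t := by
      refine IntervalIntegrable.mul_const ?_ _
      exact (ker_int (hα k).1 s t).mul_continuousOn (Continuous.continuousOn (by fun_prop))
    have h1 := intervalIntegral.norm_integral_le_of_norm_le (μ := volume) ht.1
      (f := fun τ => (t - τ) ^ (α k - 1) * ∑ j, A τ k j * v τ j)
      (g := fun τ => ((t - τ) ^ (α k - 1) * Real.exp (-(r * (t - τ)))) *
        (m * |M| * U * Real.exp (r * (t - s)))) ?_ hgi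
    · rw [intervalIntegral.integral_mul_const, Real.norm_eq_abs] at h1
      have h2 := ker_exp (hα k).1 hr ht.1
      have h3 : |J (α k) s (fun τ => ∑ j, A τ k j * v τ j) t|
          ≤ U / 2 * Real.exp (r * (t - s)) := by
        rw [J, abs_mul, abs_of_pos (by positivity), one_div, inv_mul_le_iff₀ hG]
        refine h1.trans ((mul_le_mul_of_nonneg_right h2 (by positivity)).trans ?_)
        have := mul_le_mul_of_nonneg_right (hr2 k)
          (show 0 ≤ U * Real.exp (r * (t - s)) * Real.Gamma (α k) by positivity)
        nlinarith
      have h4 : |v t k| ≤ c + U / 2 * Real.exp (r * (t - s)) := by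
        rw [hveq t ht k]
        exact (abs_add_le _ _).trans (add_le_add (hc' k) h3)
      rw [Real.exp_neg, inv_mul_le_iff₀ (Real.exp_pos _)]
      have h5 : 1 ≤ Real.exp (r * (t - s)) :=
        Real.one_le_exp (mul_nonneg hr.le (by linarith [ht.1]))
      nlinarith
    · filter_upwards [hA''] with τ h hτ
      have h3 : 0 ≤ t - τ := by linarith [hτ.2]
      rw [norm_mul, Real.norm_eq_abs, abs_of_nonneg (Real.rpow_nonneg h3 _), mul_assoc]
      refine mul_le_mul_of_nonneg_left ?_ (Real.rpow_nonneg h3 _)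
      have h6 : Real.exp (-(r * (t - τ))) * (m * |M| * U * Real.exp (r * (t - s)))
          = ∑ _j : Fin m, |M| * (U * Real.exp (r * (τ - s))) := by
        have : Real.exp (r * (τ - s)) = Real.exp (-(r * (t - τ))) * Real.exp (r * (t - s)) := by
          rw [← Real.exp_add]; congr 1; ring
        rw [this]; simp; ring
      rw [h6]
      refine norm_sum_le_of_le _ fun j _ => ?_
      rw [norm_mul]
      exact mul_le_mul ((h hτ k j).trans (le_abs_self M))
        (hUall τ ⟨hτ.1.le, hτ.2.trans ht.2⟩ j) (norm_nonneg _) (abs_nonneg _)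
  have hUle : U ≤ c + U / 2 := step _ (hT i₀) i₀
  refine (hUall t ht i).trans ?_
  have h7 : Real.exp (r * (t - s)) ≤ Real.exp (r * (b - a)) := by
    refine Real.exp_le_exp.2 (mul_le_mul_of_nonneg_left ?_ hr.le)
    linarith [ht.2, hs.1]
  calc U * Real.exp (r * (t - s)) ≤ (2 * c) * Real.exp (r * (b - a)) := by
        refine mul_le_mul (by linarith) h7 (Real.exp_pos _).le (by linarith)
    _ = _ := by ring

end FracAux
namespace FracAux

lemma fub {α a t C : ℝ} (hα : 0 < α) (hat : a ≤ t) (G : ℝ × ℝ → ℝ) (hG : Measurable G)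
    (hC : ∀ᵐ p ∂((volume.restrict (Ioc a t)).prod (volume.restrict (Ioc a t))),
      p.2 ≤ p.1 → |G p| ≤ C) :
    J α a (fun τ => ∫ s in a..τ, G (τ, s)) t
      = ∫ s in a..t, J α s (fun τ => G (τ, s)) t := by
  have hms : MeasurableSet {p : ℝ × ℝ | p.2 ≤ p.1} := measurableSet_le measurable_snd measurable_fst
  have hk := ker_int hα a t
  rw [intervalIntegrable_iff_integrableOn_Ioc_of_le hat] at hk
  have h1 : Integrable (fun p : ℝ × ℝ => (t - p.1) ^ (α - 1) * 1)
      ((volume.restrict (Ioc a t)).prod (volume.restrict (Ioc a t))) :=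
    Integrable.mul_prod hk (integrable_const (1 : ℝ))
  have h2 := Integrable.mul_bdd (c := |C|) h1 (g := {p : ℝ × ℝ | p.2 ≤ p.1}.indicator G)
    (hG.indicator hms).aestronglyMeasurable (by
      filter_upwards [hC] with p hp
      by_cases h : p.2 ≤ p.1
      · rw [indicator_of_mem (by exact h)]
        exact (hp h).trans (le_abs_self C)
      · rw [indicator_of_notMem (by exact h)]
        simp)
  have h3 : {p : ℝ × ℝ | p.2 ≤ p.1}.indicator (fun p => (t - p.1) ^ (α - 1) * G p)
      = fun p => (t - p.1) ^ (α - 1) * 1 * {p : ℝ × ℝ | p.2 ≤ p.1}.indicator G p := by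
    ext p
    by_cases h : p.2 ≤ p.1 <;> simp [indicator, h]
  have key := tri hat (fun p => (t - p.1) ^ (α - 1) * G p) (by rw [h3]; exact h2)
  simp only [J, intervalIntegral.integral_const_mul]
  rw [← key]
  simp only [intervalIntegral.integral_const_mul]

lemma zero_of_int {a b : ℝ} (hab : a < b) {w : ℝ → ℝ} (hw : ContinuousOn w (Icc a b))
    (h : ∀ t ∈ Icc a b, ∫ s in a..t, w s = 0) : ∀ t ∈ Icc a b, w t = 0 := by
  intro t ht
  have : Fact (t ∈ Icc a b) := ⟨ht⟩
  have h1 : HasDerivWithinAt (fun u => ∫ x in a..u, w x) (w t) (Icc a b) t := by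
    refine intervalIntegral.integral_hasDerivWithinAt_right (t := Icc a b) ?_ ?_ (hw t ht)
    · refine ContinuousOn.intervalIntegrable ?_
      rw [uIcc_of_le ht.1]
      exact hw.mono (Icc_subset_Icc le_rfl ht.2)
    · exact hw.stronglyMeasurableAtFilter_nhdsWithin measurableSet_Icc t
  have h2 : HasDerivWithinAt (fun u => ∫ x in a..u, w x) 0 (Icc a b) t :=
    (hasDerivWithinAt_const t (Icc a b) (0:ℝ)).congr (fun u hu => h u hu) (h t ht)
  exact (uniqueDiffOn_Icc hab t ht).eq_deriv _ h1 h2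

lemma rlInt_congr {β a t : ℝ} (hat : a ≤ t) {f g : ℝ → ℝ} (h : ∀ s ∈ Icc a t, f s = g s) :
    rlInt a β f t = rlInt a β g t := by
  by_cases hβ : β = 0
  · simp [rlInt, hβ, h t ⟨hat, le_rfl⟩]
  · rw [rlInt_pos hβ, rlInt_pos hβ]
    refine J_congr hat ?_
    filter_upwards [ae_restrict_mem measurableSet_Ioc] with s hs
    exact h s (Ioc_subset_Icc_self hs)

lemma rlInt_sub {α : ℝ} (hα1 : α ≤ 1) {a t : ℝ} (hat : a ≤ t) {f g : ℝ → ℝ} (hf : BM a t f)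
    (hg : BM a t g) : rlInt a (1 - α) (fun s => f s - g s) t
      = rlInt a (1 - α) f t - rlInt a (1 - α) g t := by
  rcases hα1.eq_or_lt with h | h
  · subst h; simp [rlInt_zero]
  · simp only [rlInt_pos (sub_pos.2 h).ne']
    exact J_sub (by linarith) hat hf hg

lemma rlInt_cont {α : ℝ} (hα : 0 < α) (hα1 : α ≤ 1) {a b : ℝ} {f : ℝ → ℝ}
    (hf : ContinuousOn f (Icc a b)) : ContinuousOn (fun t => rlInt a (1 - α) f t) (Icc a b) := by
  rcases hα1.eq_or_lt with h | h
  · subst h; simpa [rlInt_zero] using hf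
  · simp only [rlInt_pos (sub_pos.2 h).ne']
    exact J_cont (by linarith) (by linarith) (BM.of_cont hf)

/-- If `I^{1-α} w` is a.e. constant, `w` continuous and `w a = 0`, then `w = 0`. -/
lemma zero_of_rlInt {α : ℝ} (hα : 0 < α) (hα1 : α ≤ 1) {a b c : ℝ} (hab : a < b) {w : ℝ → ℝ}
    (hw : ContinuousOn w (Icc a b)) (hwa : w a = 0)
    (h : ∀ᵐ t ∂(volume.restrict (Icc a b)), rlInt a (1 - α) w t = c) :
    ∀ t ∈ Icc a b, w t = 0 := by
  have h1 := Measure.eqOn_Icc_of_ae_eq volume hab.ne (f := fun t => rlInt a (1 - α) w t)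
    (g := fun _ => c) h (rlInt_cont hα hα1 hw) continuousOn_const
  have hc : c = 0 := by
    have h2 := h1 (left_mem_Icc.2 hab.le)
    simp only at h2
    rw [← h2, rlInt]
    split_ifs <;> simp [hwa]
  subst hc
  refine zero_of_int hab hw fun t ht => ?_
  rw [← J_rlInt hα hα1 ht.1 ((BM.of_cont hw).mono le_rfl ht.2)]
  rw [J_congr ht.1 (g := fun _ => 0)]
  · simp [J]
  · filter_upwards [ae_restrict_mem measurableSet_Ioc] with s hs
    exact h1 ⟨hs.1.le, hs.2.trans ht.2⟩

lemma cont_of_Icc {a : ℝ} {I : Set ℝ} (hIsub : I ⊆ Ici a) {E : Type*} [TopologicalSpace E]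
    {f : ℝ → E} (h : ∀ b ∈ I, ContinuousOn f (Icc a b)) : ContinuousOn f I := by
  intro t ht
  by_cases hb : ∃ b ∈ I, t < b
  · obtain ⟨b, hb, htb⟩ := hb
    have h1 := h b hb t ⟨hIsub ht, htb.le⟩
    refine h1.mono_of_mem_nhdsWithin ?_
    filter_upwards [self_mem_nhdsWithin, mem_nhdsWithin_of_mem_nhds (Iio_mem_nhds htb)] with u h1 h2
    exact ⟨hIsub h1, le_of_lt h2⟩
  · push Not at hb
    exact (h t ht t ⟨hIsub ht, le_rfl⟩).mono fun u hu => ⟨hIsub hu, hb u hu⟩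

end FracAux
theorem statement19 (a : ℝ) (I : Set ℝ)
    (haI : a ∈ I) (hIsub : I ⊆ Set.Ici a) (hIint : (interior I).Nonempty)
    (hIord : I.OrdConnected)
    (m : ℕ) (hm : 0 < m)
    (α : Fin m → ℝ) (hα : ∀ i, 0 < α i ∧ α i ≤ 1)
    (qa : Fin m → ℝ)
    (A : ℝ → Matrix (Fin m) (Fin m) ℝ) (B : ℝ → Fin m → ℝ)
    -- `A` and `B` are measurable and locally essentially bounded on `I`
    (hAmeas : ∀ i j, Measurable fun t => A t i j)
    (hAbdd : ∀ b ∈ I, ∃ M : ℝ,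
      ∀ᵐ t ∂(volume.restrict (Set.Icc a b)), ∀ i j, |A t i j| ≤ M)
    (hBmeas : ∀ i, Measurable fun t => B t i)
    (hBbdd : ∀ b ∈ I, ∃ M : ℝ,
      ∀ᵐ t ∂(volume.restrict (Set.Icc a b)), ∀ i, |B t i| ≤ M)
    (cZ : ℝ → ℝ → Matrix (Fin m) (Fin m) ℝ)
    (hcZmeas : ∀ i j, Measurable fun p : ℝ × ℝ => cZ p.1 p.2 i j)
    (hcZcont : ∀ s ∈ I, ∀ i j, ContinuousOn (fun t => cZ t s i j) (I ∩ Set.Ici s))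
    -- `cZ` satisfies the left Caputo state-transition integral equation
    (hcZeq : ∀ s ∈ I, ∀ t ∈ I, s ≤ t → ∀ i j,
      cZ t s i j = (if i = j then (1:ℝ) else 0)
        + (1 / Real.Gamma (α i)) *
            ∫ τ in s..t, (t - τ) ^ (α i - 1) * ∑ k, A τ i k * cZ τ s k j)
    (q₂ : ℝ → Fin m → ℝ)
    -- `q₂` is given by the Duhamel-type formula with `cZ` in both terms
    (hq₂ : ∀ t ∈ I, ∀ i,
      q₂ t i = (∑ j, cZ t a i j * qa j) + ∫ s in a..t, ∑ j, cZ t s i j * B s j) :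
    (∀ t ∈ I, ∀ i,
      q₂ t i = qa i + (1 / Real.Gamma (α i)) *
        ∫ τ in a..t, (t - τ) ^ (α i - 1) *
          ((∑ j, A τ i j * q₂ τ j) + rlInt a (1 - α i) (fun s => B s i) τ)) ∧
    IsCaputoSol a I α qa
      (fun x t i => (∑ j, A t i j * x j) + rlInt a (1 - α i) (fun s => B s i) t) q₂ ∧
    ∀ q' : ℝ → Fin m → ℝ,
      IsCaputoSol a I α qa
        (fun x t i => (∑ j, A t i j * x j) + rlInt a (1 - α i) (fun s => B s i) t) q' →
      ∀ t ∈ I, q' t = q₂ t := by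
  classical
  have hIcc : ∀ b ∈ I, Icc a b ⊆ I := fun b hb => hIord.out haI hb
  have hABM : ∀ b ∈ I, ∀ i j, FracAux.BM a b (fun t => A t i j) := by
    intro b hb i j
    obtain ⟨M, hM⟩ := hAbdd b hb
    refine ⟨(hAmeas i j).aestronglyMeasurable, M, ?_⟩
    filter_upwards [ae_restrict_of_ae_restrict_of_subset Ioc_subset_Icc_self hM] with t ht
    exact ht i j
  have hBBM : ∀ b ∈ I, ∀ i, FracAux.BM a b (fun t => B t i) := by
    intro b hb i
    obtain ⟨M, hM⟩ := hBbdd b hb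
    refine ⟨(hBmeas i).aestronglyMeasurable, M, ?_⟩
    filter_upwards [ae_restrict_of_ae_restrict_of_subset Ioc_subset_Icc_self hM] with t ht
    exact ht i
  have hZcont : ∀ b ∈ I, ∀ s ∈ Icc a b, ∀ i j, ContinuousOn (fun t => cZ t s i j) (Icc s b) := by
    intro b hb s hs i j
    refine (hcZcont s (hIcc b hb hs) i j).mono fun t ht => ⟨?_, ht.1⟩
    exact hIcc b hb ⟨hs.1.trans ht.1, ht.2⟩
  -- uniform bound on the state transition matrix
  have hZb : ∀ b ∈ I, ∃ K : ℝ, 0 ≤ K ∧ ∀ s ∈ Icc a b, ∀ t ∈ Icc s b, ∀ i j, |cZ t s i j| ≤ K := by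
    intro b hb
    obtain ⟨M, hM⟩ := hAbdd b hb
    obtain ⟨K, hK0, hK⟩ := FracAux.gronwall α hα M (a := a) (b := b)
    refine ⟨K, hK0, fun s hs t ht i j => ?_⟩
    have := hK A s hs hM 1 zero_le_one (fun i => if i = j then (1:ℝ) else 0)
      (by intro i; split_ifs <;> simp) (fun t k => cZ t s k j) (fun k => hZcont b hb s hs k j)
      (fun t ht i => hcZeq s (hIcc b hb hs) t (hIcc b hb ⟨hs.1.trans ht.1, ht.2⟩) ht.1 i j) t ht i
    simpa using this
  -- the equation contracted with a vector
  have hinner : ∀ t ∈ I, ∀ s ∈ Icc a t, ∀ (w : Fin m → ℝ) (i : Fin m),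
      FracAux.J (α i) s (fun τ => ∑ j, A τ i j * ∑ k, cZ τ s j k * w k) t
        = (∑ k, cZ t s i k * w k) - w i := by
    intro t ht s hs w i
    have hZ := fun k => hcZeq s (hIcc t ht hs) t ht hs.2 i k
    have e1 : ∀ τ, (t - τ) ^ (α i - 1) * ∑ j, A τ i j * ∑ k, cZ τ s j k * w k
        = ∑ k, ((t - τ) ^ (α i - 1) * ∑ j, A τ i j * cZ τ s j k) * w k := by
      intro τ
      simp only [Finset.mul_sum, Finset.sum_mul]
      rw [Finset.sum_comm]
      simp only [mul_assoc]
    have hkint : ∀ k, IntervalIntegrable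
        (fun τ => (t - τ) ^ (α i - 1) * ∑ j, A τ i j * cZ τ s j k) volume s t := by
      intro k
      refine FracAux.ker_mul_int (hα i).1 (FracAux.BM.sum _ fun j => ?_) hs.2 t
      exact ((hABM t ht i j).mono hs.1 le_rfl).mul (FracAux.BM.of_cont (hZcont t ht s hs j k))
    rw [FracAux.J]
    simp only [e1]
    rw [intervalIntegral.integral_finsetSum (fun k _ => (hkint k).mul_const (w k))]
    simp only [intervalIntegral.integral_mul_const]
    rw [Finset.mul_sum]
    have e2 : w i = ∑ k, (if i = k then (1:ℝ) else 0) * w k := by simp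
    rw [e2, ← Finset.sum_sub_distrib]
    refine Finset.sum_congr rfl fun k _ => ?_
    rw [← sub_mul, hZ k]
    ring
  -- the Duhamel integral
  set P : Fin m → ℝ → ℝ := fun i t => ∫ s in a..t, ∑ j, cZ t s i j * B s j with hP
  have hZBm : ∀ i, Measurable fun p : ℝ × ℝ => ∑ j, cZ p.1 p.2 i j * B p.2 j := by
    intro i
    exact Finset.measurable_fun_sum _ fun j _ =>
      (hcZmeas i j).mul ((hBmeas j).comp measurable_snd)
  have hZBM : ∀ t ∈ I, ∀ i, FracAux.BM a t (fun s => ∑ j, cZ t s i j * B s j) := by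
    intro t ht i
    refine FracAux.BM.sum _ fun j => FracAux.BM.mul ?_ (hBBM t ht j)
    obtain ⟨K, hK0, hK⟩ := hZb t ht
    refine ⟨((hcZmeas i j).comp measurable_prodMk_left).aestronglyMeasurable, K, ?_⟩
    filter_upwards [ae_restrict_mem measurableSet_Ioc] with s hs
    exact hK s ⟨hs.1.le, hs.2⟩ t ⟨hs.2, le_rfl⟩ i j
  -- pointwise a.e. bound of Z B
  have hZBb : ∀ b ∈ I, ∃ C : ℝ, 0 ≤ C ∧ ∀ᵐ s ∂(volume.restrict (Ioc a b)), ∀ t ∈ Icc s b, ∀ i,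
      |∑ j, cZ t s i j * B s j| ≤ C := by
    intro b hb
    obtain ⟨K, hK0, hK⟩ := hZb b hb
    obtain ⟨M, hM⟩ := hBbdd b hb
    refine ⟨m * (K * |M|), by positivity, ?_⟩
    filter_upwards [ae_restrict_of_ae_restrict_of_subset Ioc_subset_Icc_self hM,
      ae_restrict_mem measurableSet_Ioc] with s hs hs' t ht i
    have : (m * (K * |M|) : ℝ) = ∑ _j : Fin m, K * |M| := by simp
    rw [this]
    refine (Finset.abs_sum_le_sum_abs _ _).trans (Finset.sum_le_sum fun j _ => ?_)
    rw [abs_mul]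
    exact mul_le_mul (hK s ⟨hs'.1.le, hs'.2⟩ t ht i j) ((hs j).trans (le_abs_self _))
      (abs_nonneg _) hK0
  have hPBM : ∀ b ∈ I, ∀ i, FracAux.BM a b (P i) := by
    intro b hb i
    obtain ⟨C, hC0, hC⟩ := hZBb b hb
    refine ⟨?_, C * (b - a), ?_⟩
    · have hm1 : MeasurableSet {p : ℝ × ℝ | a < p.2 ∧ p.2 ≤ p.1} :=
        (measurableSet_lt measurable_const measurable_snd).inter
          (measurableSet_le measurable_snd measurable_fst)
      have h1 := ((hZBm i).indicator hm1).stronglyMeasurable.integral_prod_right' (ν := volume)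
      refine h1.aestronglyMeasurable.congr ?_
      filter_upwards [ae_restrict_mem measurableSet_Ioc] with t ht
      simp only [hP]
      rw [intervalIntegral.integral_of_le ht.1.le, ← integral_indicator measurableSet_Ioc]
      rfl
    · filter_upwards [ae_restrict_mem measurableSet_Ioc] with t ht
      have hat : a ≤ t := ht.1.le
      have hC' := ae_restrict_of_ae_restrict_of_subset (Ioc_subset_Ioc (le_refl a) ht.2) hC
      rw [ae_restrict_iff' measurableSet_Ioc] at hC'
      have h2 := intervalIntegral.norm_integral_le_of_norm_le_const_ae (a := a) (b := t) (C := C)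
        (f := fun s => ∑ j, cZ t s i j * B s j) (by
          rw [uIoc_of_le hat]
          filter_upwards [hC'] with s hs hs'
          exact hs hs' t ⟨hs'.2, ht.2⟩ i)
      refine h2.trans ?_
      rw [abs_of_nonneg (by linarith)]
      exact mul_le_mul_of_nonneg_left (by linarith [ht.2]) hC0
  have hJP : ∀ t ∈ I, ∀ i, FracAux.J (α i) a (fun τ => ∑ j, A τ i j * P j τ) t
      = P i t - ∫ s in a..t, B s i := by
    intro t ht i
    have hat : a ≤ t := hIsub ht
    obtain ⟨C, hC0, hC⟩ := hZBb t ht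
    obtain ⟨M, hM⟩ := hAbdd t ht
    have hM := ae_restrict_of_ae_restrict_of_subset (Ioc_subset_Icc_self) hM
    have hf := FracAux.fub (C := m * (|M| * C)) (hα i).1 hat
      (fun p => ∑ j, A p.1 i j * ∑ k, cZ p.1 p.2 j k * B p.2 k)
      (Finset.measurable_fun_sum _ fun j _ => ((hAmeas i j).comp measurable_fst).mul (hZBm j))
      (by
        have f1 := (Measure.quasiMeasurePreserving_fst (μ := volume.restrict (Ioc a t))
          (ν := volume.restrict (Ioc a t))).ae hM
        have f2 := (Measure.quasiMeasurePreserving_snd (μ := volume.restrict (Ioc a t))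
          (ν := volume.restrict (Ioc a t))).ae hC
        have f3 := (Measure.quasiMeasurePreserving_fst (μ := volume.restrict (Ioc a t))
          (ν := volume.restrict (Ioc a t))).ae (ae_restrict_mem measurableSet_Ioc)
        filter_upwards [f1, f2, f3] with p h1 h2 h3 h
        have : (m * (|M| * C) : ℝ) = ∑ _j : Fin m, |M| * C := by simp
        rw [this]
        refine (Finset.abs_sum_le_sum_abs _ _).trans (Finset.sum_le_sum fun j _ => ?_)
        rw [abs_mul]
        exact mul_le_mul ((h1 i j).trans (le_abs_self _)) (h2 p.1 ⟨h, h3.2⟩ j)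
          (abs_nonneg _) (abs_nonneg _))
    have e1 : FracAux.J (α i) a (fun τ => ∑ j, A τ i j * P j τ) t
        = FracAux.J (α i) a (fun τ => ∫ s in a..τ, ∑ j, A τ i j * ∑ k, cZ τ s j k * B s k) t := by
      refine FracAux.J_congr hat ?_
      filter_upwards [ae_restrict_mem measurableSet_Ioc] with τ hτ
      have hτI : τ ∈ I := hIcc t ht (Ioc_subset_Icc_self hτ)
      rw [intervalIntegral.integral_finsetSum
        (fun j _ => ((hZBM τ hτI j).int hτ.1.le).const_mul (A τ i j))]
      simp only [intervalIntegral.integral_const_mul, hP]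
    have e2 : ∫ s in a..t, FracAux.J (α i) s
          (fun τ => ∑ j, A τ i j * ∑ k, cZ τ s j k * B s k) t
        = ∫ s in a..t, ((∑ k, cZ t s i k * B s k) - B s i) := by
      refine intervalIntegral.integral_congr fun s hs => ?_
      rw [uIcc_of_le hat] at hs
      exact hinner t ht s hs (B s) i
    rw [e1, hf, e2, intervalIntegral.integral_sub ((hZBM t ht i).int hat) ((hBBM t ht i).int hat)]
  have hZaBM : ∀ b ∈ I, ∀ i, FracAux.BM a b (fun t => ∑ j, cZ t a i j * qa j) := by
    intro b hb i
    refine FracAux.BM.sum _ fun j => FracAux.BM.mul ?_ (FracAux.BM.const _ _ _)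
    exact FracAux.BM.of_cont (hZcont b hb a ⟨le_rfl, hIsub hb⟩ i j)
  have hq₂BM : ∀ b ∈ I, ∀ i, FracAux.BM a b (fun t => q₂ t i) := by
    intro b hb i
    refine ((hZaBM b hb i).add (hPBM b hb i)).congr ?_
    filter_upwards [ae_restrict_mem measurableSet_Ioc] with t ht
    exact (hq₂ t (hIcc b hb (Ioc_subset_Icc_self ht)) i).symm
  have hRBM : ∀ b ∈ I, ∀ i, FracAux.BM a b (fun t => rlInt a (1 - α i) (fun s => B s i) t) :=
    fun b hb i => FracAux.rlInt_BM (hα i).1 (hα i).2 (hBBM b hb i)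
  have hAq : ∀ q : ℝ → Fin m → ℝ, ∀ b ∈ I, (∀ i, FracAux.BM a b (fun t => q t i)) →
      ∀ i, FracAux.BM a b (fun t => ∑ j, A t i j * q t j) :=
    fun q b hb hq i => FracAux.BM.sum _ fun j => (hABM b hb i j).mul (hq j)
  have hfBM : ∀ b ∈ I, ∀ i, FracAux.BM a b (fun t => (∑ j, A t i j * q₂ t j)
      + rlInt a (1 - α i) (fun s => B s i) t) :=
    fun b hb i => (hAq q₂ b hb (hq₂BM b hb) i).add (hRBM b hb i)
  have claim1 : ∀ t ∈ I, ∀ i, q₂ t i = qa i + FracAux.J (α i) a (fun τ =>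
      (∑ j, A τ i j * q₂ τ j) + rlInt a (1 - α i) (fun s => B s i) τ) t := by
    intro t ht i
    have hat : a ≤ t := hIsub ht
    rw [FracAux.J_add (hα i).1 hat (hAq q₂ t ht (hq₂BM t ht) i) (hRBM t ht i),
      FracAux.J_rlInt (hα i).1 (hα i).2 hat (hBBM t ht i)]
    have e1 : FracAux.J (α i) a (fun τ => ∑ j, A τ i j * q₂ τ j) t
        = FracAux.J (α i) a (fun τ => (∑ j, A τ i j * ∑ k, cZ τ a j k * qa k)
          + ∑ j, A τ i j * P j τ) t := by
      refine FracAux.J_congr hat ?_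
      filter_upwards [ae_restrict_mem measurableSet_Ioc] with τ hτ
      rw [← Finset.sum_add_distrib]
      refine Finset.sum_congr rfl fun j _ => ?_
      rw [hq₂ τ (hIcc t ht (Ioc_subset_Icc_self hτ)) j, mul_add]
    rw [e1, FracAux.J_add (hα i).1 hat
      (hAq (fun τ j => ∑ k, cZ τ a j k * qa k) t ht (hZaBM t ht) i)
      (hAq (fun τ j => P j τ) t ht (hPBM t ht) i), hinner t ht a ⟨le_rfl, hat⟩ qa i,
      hJP t ht i, hq₂ t ht i]
    ring
  have hq₂c : ∀ b ∈ I, ∀ i, ContinuousOn (fun t => q₂ t i) (Icc a b) := by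
    intro b hb i
    refine ((continuousOn_const (c := qa i)).add (FracAux.J_cont (hα i).1 (hα i).2 (hfBM b hb i))).congr ?_
    intro t ht
    exact claim1 t (hIcc b hb ht) i
  refine ⟨claim1, ⟨?_, ?_, ?_⟩, ?_⟩
  · exact FracAux.cont_of_Icc hIsub fun b hb => continuousOn_pi.2 fun i => hq₂c b hb i
  · ext i
    rw [claim1 a haI i]
    simp [FracAux.J]
  · intro i
    refine ⟨0, fun t => (∑ j, A t i j * q₂ t j) + rlInt a (1 - α i) (fun s => B s i) t, ?_, ?_, ?_⟩
    · intro b hb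
      have := (hfBM b hb i).int (hIsub hb)
      rwa [intervalIntegrable_iff_integrableOn_Icc_of_le (hIsub hb)] at this
    · filter_upwards [ae_restrict_mem hIord.measurableSet] with t ht
      rw [zero_add, ← FracAux.rlInt_J (hα i).1 (hα i).2 (hIsub ht) (hfBM t ht i)]
      refine FracAux.rlInt_congr (hIsub ht) fun s hs => ?_
      rw [claim1 s (hIcc t ht hs) i]
      ring
    · exact Filter.Eventually.of_forall fun t => rfl
  · rintro q' ⟨hq'c, hq'a, hq'⟩
    have hq'ci : ∀ b ∈ I, ∀ i, ContinuousOn (fun t => q' t i) (Icc a b) := fun b hb i =>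
      (continuousOn_pi.1 hq'c i).mono (hIcc b hb)
    have hgBM : ∀ b ∈ I, ∀ i, FracAux.BM a b (fun t => (∑ j, A t i j * q' t j)
        + rlInt a (1 - α i) (fun s => B s i) t) :=
      fun b hb i => (hAq q' b hb (fun i => FracAux.BM.of_cont (hq'ci b hb i)) i).add (hRBM b hb i)
    have claim2 : ∀ t ∈ I, ∀ i, q' t i = qa i + FracAux.J (α i) a (fun τ =>
        (∑ j, A τ i j * q' τ j) + rlInt a (1 - α i) (fun s => B s i) τ) t := by
      intro b hb i
      rcases (show a ≤ b from hIsub hb).eq_or_lt with hab | hab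
      · subst hab
        rw [hq'a]
        simp [FracAux.J]
      obtain ⟨c, h, hhloc, hh1, hh2⟩ := hq' i
      set g : ℝ → ℝ := fun τ => (∑ j, A τ i j * q' τ j) + rlInt a (1 - α i) (fun s => B s i) τ
        with hg
      have hqc : ContinuousOn (fun t => q' t i - qa i) (Icc a b) :=
        (hq'ci b hb i).sub continuousOn_const
      have hJc := FracAux.J_cont (hα i).1 (hα i).2 (hgBM b hb i)
      have hz := FracAux.zero_of_rlInt (hα i).1 (hα i).2 (c := c) hab
        (w := fun t => (q' t i - qa i) - FracAux.J (α i) a g t) (hqc.sub hJc)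
        (by simp [hq'a, FracAux.J])
        (by
          filter_upwards [ae_restrict_of_ae_restrict_of_subset (hIcc b hb) hh1,
            ae_restrict_mem measurableSet_Icc] with t ht htb
          rw [FracAux.rlInt_sub (hα i).2 htb.1 ((FracAux.BM.of_cont hqc).mono le_rfl htb.2)
            ((FracAux.BM.of_cont hJc).mono le_rfl htb.2), ht,
            FracAux.rlInt_J (hα i).1 (hα i).2 htb.1 ((hgBM b hb i).mono le_rfl htb.2)]
          have : ∫ s in a..t, h s = ∫ s in a..t, g s := by
            rw [intervalIntegral.integral_of_le htb.1, intervalIntegral.integral_of_le htb.1]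
            refine integral_congr_ae ?_
            exact ae_restrict_of_ae_restrict_of_subset ((Ioc_subset_Icc_self.trans
              (Icc_subset_Icc le_rfl htb.2)).trans (hIcc b hb)) hh2
          rw [this]
          ring)
      have := hz b ⟨hab.le, le_rfl⟩
      linarith
    intro t ht
    have hat : a ≤ t := hIsub ht
    obtain ⟨M, hM⟩ := hAbdd t ht
    obtain ⟨K, hK0, hK⟩ := FracAux.gronwall α hα M (a := a) (b := t)
    ext i
    have := hK A a ⟨le_rfl, hat⟩ hM 0 le_rfl (fun _ => 0) (by simp)
      (fun t i => q' t i - q₂ t i) (fun i => (hq'ci t ht i).sub (hq₂c t ht i))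
      (by
        intro u hu i
        have huI := hIcc t ht hu
        rw [zero_add]
        rw [claim2 u huI i, claim1 u huI i, add_sub_add_left_eq_sub,
          ← FracAux.J_sub (hα i).1 hu.1 (hgBM u huI i) (hfBM u huI i)]
        refine FracAux.J_congr hu.1 (Filter.Eventually.of_forall fun s => ?_)
        simp only [mul_sub, Finset.sum_sub_distrib]
        ring) t ⟨hat, le_rfl⟩ i
    rw [mul_zero] at this
    exact sub_eq_zero.1 (abs_nonpos_iff.1 this)
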